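/- Let A ⊆ B be a graded extension of positively graded k-algebras, both spanned by the identity in degree zero, with ∂ : B → A an A-linear homogeneous map of degree −2ℓ. Suppose {c_i} and {d_i} are almost dual bases of B over A with respect to ∂. Then there exists a family {d'_i} such that {c_i} and {d'_i} are dual bases (∂(c_i d'_j) = δ_{ij} exactly), and moreover d_i ≡ d'_i modulo the ideal of B generated by m_A. In particular the extension A ⊆ B is graded Frobenius with trace ∂. -/

import Mathlib

open scoped Classical

/-- The family `b : Fin n → Bb` is a basis of `Bb` as a module over the subalgebra `A`:
every element has a unique decomposition with coefficients in `A`. -/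
def IsBasisOverSub {k Bb : Type} [Field k] [CommRing Bb] [Algebra k Bb]
    (A : Subalgebra k Bb) {n : ℕ} (b : Fin n → Bb) : Prop :=
  ∀ f : Bb, ∃! g : Fin n → Bb, (∀ i, g i ∈ A) ∧ f = ∑ i, g i * b i

/-- Membership in `m_A`, the graded Jacobson radical of `A`: the ideal of `A` spanned by
all elements of strictly positive degree. -/
def InGradedMax {k Bb : Type} [Field k] [CommRing Bb] [Algebra k Bb]
    (ℬ : ℕ → Submodule k Bb) (A : Subalgebra k Bb) (f : Bb) : Prop :=
  f ∈ A ∧ f ∈ ⨆ n ∈ Set.Ioi (0 : ℕ), ℬ n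

/-- Let `A ⊆ B` be a graded extension of positively graded `k`-algebras,
both spanned by the identity in degree zero, and `∂ : B → A` an `A`-linear map homogeneous
of degree `−2ℓ`. If `{c_i}` and `{d_i}` are almost dual bases of `B` over `A` with respect
to `∂`, then there is a family `{d'_i}` such that `{c_i}` and `{d'_i}` are dual bases
(`∂(c_i d'_j) = δ_{ij}` exactly), with `d_i ≡ d'_i` modulo the ideal of `B` generated by
`m_A`. In particular `A ⊆ B` is a graded Frobenius extension with trace `∂`. -/
theorem stmt12 {k Bb : Type} [Field k] [CommRing Bb] [Algebra k Bb]
    (ℬ : ℕ → Submodule k Bb) [GradedAlgebra ℬ]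
    (hB0 : ℬ 0 = Submodule.span k {(1 : Bb)})
    (A : Subalgebra k Bb)
    (hAgraded : ∀ f ∈ A, ∀ m : ℕ, (DirectSum.decompose ℬ f m : Bb) ∈ A)
    (l : ℕ) (D : Bb →ₗ[k] Bb)
    (hDA : ∀ b : Bb, D b ∈ A)
    (hDlin : ∀ a ∈ A, ∀ b : Bb, D (a * b) = a * D b)
    (hDdeg : ∀ (m : ℕ) (b : Bb), b ∈ ℬ (m + 2 * l) → D b ∈ ℬ m)
    (hDlow : ∀ (m : ℕ) (b : Bb), b ∈ ℬ m → m < 2 * l → D b = 0)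
    (n : ℕ) (c d : Fin n → Bb)
    (hc : ∀ i, ∃ m, c i ∈ ℬ m) (hd : ∀ i, ∃ m, d i ∈ ℬ m)
    (hcbasis : IsBasisOverSub A c) (hdbasis : IsBasisOverSub A d)
    (hpair : ∀ i j, InGradedMax ℬ A (D (c i * d j) - (if i = j then 1 else 0))) :
    ∃ d' : Fin n → Bb,
      (∀ i, ∃ m, d' i ∈ ℬ m) ∧
      IsBasisOverSub A d' ∧
      (∀ i j, D (c i * d' j) = if i = j then 1 else 0) ∧
      (∀ i, d i - d' i ∈ Ideal.span {b : Bb | InGradedMax ℬ A b}) := by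
  rcases subsingleton_or_nontrivial Bb with hs | hnt
  · exact ⟨d, hd, hdbasis, fun i j => Subsingleton.elim _ _, fun i => by
      rw [sub_self]; exact Ideal.zero_mem _⟩
  choose γ hγ using hc
  choose δ hδ using hd
  have hpos : ∀ f : Bb, f ∈ (⨆ n ∈ Set.Ioi (0 : ℕ), ℬ n) → GradedAlgebra.proj ℬ 0 f = 0 := by
    intro f hf
    have hle : (⨆ n ∈ Set.Ioi (0 : ℕ), ℬ n) ≤ LinearMap.ker (GradedAlgebra.proj ℬ 0) := by
      refine iSup₂_le ?_
      intro m hm x hx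
      rw [LinearMap.mem_ker, GradedAlgebra.proj_apply]
      exact DirectSum.decompose_of_mem_ne ℬ hx (ne_of_gt hm)
    exact hle hf
  have h0 : ∀ f ∈ ℬ 0, GradedAlgebra.proj ℬ 0 f = f := by
    intro f hf
    rw [GradedAlgebra.proj_apply]
    exact DirectSum.decompose_of_mem_same ℬ hf
  have hne : ∀ m, 0 < m → ∀ f ∈ ℬ m, GradedAlgebra.proj ℬ 0 f = 0 := by
    intro m hm f hf
    rw [GradedAlgebra.proj_apply]
    exact DirectSum.decompose_of_mem_ne ℬ hf (ne_of_gt hm)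
  have h1 : (1 : Bb) ∈ ℬ 0 := SetLike.GradedOne.one_mem
  have hcd : ∀ i j, c i * d j ∈ ℬ (γ i + δ j) := fun i j => SetLike.mul_mem_graded (hγ i) (hδ j)
  have hsum : ∀ i, γ i + δ i = 2 * l := by
    intro i
    have hp := hpos _ (hpair i i).2
    rw [if_pos rfl, map_sub, h0 1 h1] at hp
    rcases lt_trichotomy (γ i + δ i) (2 * l) with h | h | h
    · rw [hDlow _ _ (hcd i i) h, map_zero] at hp
      simp at hp
    · exact h
    · have hD : D (c i * d i) ∈ ℬ (γ i + δ i - 2 * l) := by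
        apply hDdeg
        rw [Nat.sub_add_cancel h.le]
        exact hcd i i
      rw [hne _ (by omega) _ hD] at hp
      simp at hp
  obtain ⟨N, hN⟩ : ∃ N : Fin n → Fin n → Bb,
      ∀ i j, N i j = D (c i * d j) - (if i = j then 1 else 0) := ⟨_, fun _ _ => rfl⟩
  have hNm : ∀ i j, InGradedMax ℬ A (N i j) := fun i j => hN i j ▸ hpair i j
  have hNz : ∀ i j, ¬ γ j < γ i → N i j = 0 := by
    intro i j hij
    have hi := hsum i
    have hj := hsum j
    have hmem : N i j ∈ ℬ 0 := by
      rw [hN]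
      refine Submodule.sub_mem _ ?_ ?_
      · rcases lt_or_eq_of_le (not_lt.mp hij) with h | h
        · rw [hDlow _ _ (hcd i j) (by omega)]
          exact Submodule.zero_mem _
        · apply hDdeg
          have : 0 + 2 * l = γ i + δ j := by omega
          rw [this]
          exact hcd i j
      · split_ifs
        · exact h1
        · exact Submodule.zero_mem _
    rw [← h0 _ hmem]
    exact hpos _ (hNm i j).2
  have hNd : ∀ i j, γ j < γ i → N i j ∈ ℬ (γ i - γ j) := by
    intro i j hij
    have hj := hsum j
    have hne' : i ≠ j := by rintro rfl; exact lt_irrefl _ hij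
    rw [hN, if_neg hne', sub_zero]
    apply hDdeg
    have : γ i - γ j + 2 * l = γ i + δ j := by omega
    rw [this]
    exact hcd i j
  have hwf : WellFounded (fun i j : Fin n => γ j < γ i) := by
    haveI : IsTrans (Fin n) (fun i j : Fin n => γ j < γ i) := ⟨fun a b c h h' => lt_trans h' h⟩
    haveI : Std.Irrefl (fun i j : Fin n => γ j < γ i) := ⟨fun a => lt_irrefl _⟩
    exact Finite.wellFounded_of_trans_of_irrefl _
  obtain ⟨d', hd'⟩ : ∃ d' : Fin n → Bb, ∀ j, d' j = d j - ∑ i, N i j * d' i := by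
    let F : ∀ j : Fin n, (∀ i, γ j < γ i → Bb) → Bb := fun j rec =>
      d j - ∑ i, if h : γ j < γ i then N i j * rec i h else 0
    refine ⟨hwf.fix F, fun j => ?_⟩
    rw [hwf.fix_eq]
    simp only [F]
    congr 1
    refine Finset.sum_congr rfl fun i _ => ?_
    split_ifs with h
    · rfl
    · rw [hNz i j h, zero_mul]
  have hdual : ∀ j i, D (c i * d' j) = if i = j then 1 else 0 := by
    intro j
    induction j using hwf.induction with
    | _ j ih =>
    intro i
    have hterm : ∀ m, D (c i * (N m j * d' m)) = if i = m then N m j else 0 := by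
      intro m
      rw [mul_left_comm, hDlin _ (hNm m j).1]
      by_cases h : γ j < γ m
      · rw [ih m h i]; split_ifs <;> simp
      · rw [hNz m j h]; simp
    rw [hd' j, mul_sub, map_sub, Finset.mul_sum, map_sum, Finset.sum_congr rfl (fun m _ => hterm m),
      Finset.sum_ite_eq, if_pos (Finset.mem_univ _), hN]
    ring
  refine ⟨d', fun j => ⟨δ j, ?_⟩, ?_, fun i j => hdual j i, fun j => ?_⟩
  · induction j using hwf.induction with
    | _ j ih =>
    rw [hd' j]
    refine Submodule.sub_mem _ (hδ j) (Submodule.sum_mem _ fun i _ => ?_)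
    by_cases h : γ j < γ i
    · have hi := hsum i
      have hj := hsum j
      have : δ j = (γ i - γ j) + δ i := by omega
      rw [this]
      exact SetLike.mul_mem_graded (hNd i j h) (ih i h)
    · rw [hNz i j h, zero_mul]
      exact Submodule.zero_mem _
  · intro f
    obtain ⟨h, ⟨hA, hf⟩, -⟩ := hdbasis f
    have key : ∀ g : Fin n → Bb, ((∀ i, g i ∈ A) ∧ f = ∑ i, g i * d' i) →
        ∀ i, g i = D (c i * f) := by
      rintro g ⟨gA, gf⟩ i
      have hterm : ∀ m, D (c i * (g m * d' m)) = if i = m then g m else 0 := by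
        intro m
        rw [mul_left_comm, hDlin _ (gA m), hdual m i]
        split_ifs <;> simp
      rw [gf, Finset.mul_sum, map_sum, Finset.sum_congr rfl (fun m _ => hterm m),
        Finset.sum_ite_eq, if_pos (Finset.mem_univ _)]
    apply existsUnique_of_exists_of_unique ?_ (fun g q hg hq => funext fun i => (key g hg i).trans (key q hq i).symm)
    refine ⟨fun i => h i + ∑ j, h j * N i j, fun i => ?_, ?_⟩
    · exact A.add_mem (hA i) (A.sum_mem fun j _ => A.mul_mem (hA j) (hNm i j).1)
    · have hdj : ∀ j, d j = d' j + ∑ i, N i j * d' i := fun j => by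
        rw [← sub_eq_iff_eq_add]; exact (hd' j).symm
      rw [hf]
      simp only [add_mul, Finset.sum_add_distrib, Finset.sum_mul]
      rw [Finset.sum_comm, ← Finset.sum_add_distrib]
      refine Finset.sum_congr rfl fun j _ => ?_
      conv_lhs => rw [hdj j]
      rw [mul_add, Finset.mul_sum]
      simp only [mul_assoc]
  · have : d j - d' j = ∑ i, N i j * d' i := by
      conv_lhs => rw [hd' j]
      ring
    rw [this]
    exact Ideal.sum_mem _ fun i _ => Ideal.mul_mem_right _ _ (Ideal.subset_span (hNm i j))
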